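/- arXiv:1810.10599 — 3 statements merged into one kernel-verified Lean document; each statement's English description precedes it below -/
import Mathlib

section
/- Let a ∈ ℝ³, let Π_a : ℝ³ ∖ {a} → S² be the map Π_a(x) = (x − a)/|x − a|, and let h : U → ℝ³ be differentiable at a point x of an open set U ⊂ ℝⁿ with h(x) ≠ a. Then the composition Π_a ∘ h is differentiable at x and |∇(Π_a ∘ h)(x)| ≤ 2 |∇h(x)| / |h(x) − a|, where |·| denotes the Euclidean (Frobenius) norm of the total derivative. -/
open Metric Set

noncomputable section

abbrev E3 : Type := EuclideanSpace ℝ (Fin 3)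

/-- Squared Frobenius norm of the full gradient of a map `ℝⁿ → ℝ³` at `x`. -/
def grad2n {n : ℕ} (h : EuclideanSpace ℝ (Fin n) → E3)
    (x : EuclideanSpace ℝ (Fin n)) : ℝ :=
  ∑ i : Fin n, ‖fderiv ℝ h x (EuclideanSpace.single i (1:ℝ))‖ ^ 2

/-- The radial projection `Π_a : ℝ³ ∖ {a} → S²`. -/
def radialProj (a : E3) (x : E3) : E3 := ‖x - a‖⁻¹ • (x - a)

/-!
The derivative of `v ↦ v / ‖v‖` at `v ≠ 0` is `‖v‖⁻¹` times the orthogonal projection onto `vᗮ`, so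
its operator norm is at most `‖v‖⁻¹`. Composing with a linear map on the left multiplies the
Frobenius norm by at most the operator norm, so the chain rule gives the gradient bound with the
constant `1`.
-/

section FrobeniusNorm

variable {ι E F G : Type*} [Fintype ι] [NormedAddCommGroup E] [InnerProductSpace ℝ E]
  [NormedAddCommGroup F] [NormedSpace ℝ F] [NormedAddCommGroup G] [NormedSpace ℝ G]

/-- The Frobenius (Hilbert–Schmidt) norm of a linear map, computed in a given orthonormal basis of
its domain. -/
def frobeniusNorm (b : OrthonormalBasis ι ℝ E) (T : E →L[ℝ] F) : ℝ :=
  √(∑ i, ‖T (b i)‖ ^ 2)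

theorem frobeniusNorm_nonneg (b : OrthonormalBasis ι ℝ E) (T : E →L[ℝ] F) :
    0 ≤ frobeniusNorm b T :=
  Real.sqrt_nonneg _

theorem frobeniusNorm_comp_le (b : OrthonormalBasis ι ℝ E) (S : F →L[ℝ] G) (T : E →L[ℝ] F) :
    frobeniusNorm b (S ∘L T) ≤ ‖S‖ * frobeniusNorm b T := by
  refine Real.sqrt_le_iff.2 ⟨mul_nonneg (norm_nonneg S) (frobeniusNorm_nonneg b T), ?_⟩
  calc ∑ i, ‖S (T (b i))‖ ^ 2
      ≤ ∑ i, (‖S‖ * ‖T (b i)‖) ^ 2 := by gcongr; exact S.le_opNorm _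
    _ = ‖S‖ ^ 2 * ∑ i, ‖T (b i)‖ ^ 2 := by simp only [mul_pow, Finset.mul_sum]
    _ = (‖S‖ * frobeniusNorm b T) ^ 2 := by
      rw [mul_pow, frobeniusNorm, Real.sq_sqrt (by positivity)]

end FrobeniusNorm

theorem sqrt_grad2n_eq_frobeniusNorm {n : ℕ} (h : EuclideanSpace ℝ (Fin n) → E3)
    (x : EuclideanSpace ℝ (Fin n)) :
    √(grad2n h x) = frobeniusNorm (EuclideanSpace.basisFun (Fin n) ℝ) (fderiv ℝ h x) := by
  simp only [grad2n, frobeniusNorm, EuclideanSpace.basisFun_apply]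

theorem radialProj_eq_normalize_sub (a x : E3) :
    radialProj a x = NormedSpace.normalize (x - a) :=
  rfl

section Normalize

variable {F : Type*} [NormedAddCommGroup F] [InnerProductSpace ℝ F] {v : F}

theorem hasFDerivAt_norm (hv : v ≠ 0) :
    HasFDerivAt (fun w : F => ‖w‖) (‖v‖⁻¹ • innerSL ℝ v) v := by
  have norm_sq_ne_zero : ‖v‖ ^ 2 ≠ 0 := by positivity
  convert! (hasStrictFDerivAt_norm_sq v).hasFDerivAt.sqrt norm_sq_ne_zero using 1
  · simp only [Real.sqrt_sq (norm_nonneg _)]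
  · ext w
    simp only [smul_apply, coe_innerSL_apply, smul_eq_mul, nsmul_eq_mul, Nat.cast_ofNat,
      Real.sqrt_sq (norm_nonneg v)]
    field_simp

theorem hasFDerivAt_normalize (hv : v ≠ 0) :
    HasFDerivAt NormedSpace.normalize (‖v‖⁻¹ • (ℝ ∙ v)ᗮ.starProjection) v := by
  have hasFDerivAt_inv_norm : HasFDerivAt (fun w : F => ‖w‖⁻¹)
      (-(‖v‖ ^ 2)⁻¹ • ‖v‖⁻¹ • innerSL ℝ v) v :=
    (hasDerivAt_inv (norm_ne_zero_iff.2 hv)).comp_hasFDerivAt v (hasFDerivAt_norm hv)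
  convert! hasFDerivAt_inv_norm.smul (hasFDerivAt_id v) using 1
  ext w
  simp only [Submodule.starProjection_orthogonal', smul_apply, sub_apply, one_apply_eq_self,
    Submodule.starProjection_singleton, Real.ringHom_apply, id_eq, add_apply,
    ContinuousLinearMap.id_apply, ContinuousLinearMap.smulRight_apply, coe_innerSL_apply,
    smul_eq_mul]
  module

theorem norm_fderiv_normalize_le (hv : v ≠ 0) :
    ‖fderiv ℝ NormedSpace.normalize v‖ ≤ ‖v‖⁻¹ := by
  rw [(hasFDerivAt_normalize hv).fderiv, norm_smul, norm_inv, norm_norm]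
  exact mul_le_of_le_one_right (by positivity) (Submodule.starProjection_norm_le _)

end Normalize

theorem radial_projection_composition_gradient_bound_general
    {ι E F : Type*} [Fintype ι] [NormedAddCommGroup E] [InnerProductSpace ℝ E]
    [NormedAddCommGroup F] [InnerProductSpace ℝ F] (b : OrthonormalBasis ι ℝ E)
    {a : F} {h : E → F} {x : E} (hdiff : DifferentiableAt ℝ h x) (hne : h x ≠ a) :
    DifferentiableAt ℝ (fun y => NormedSpace.normalize (h y - a)) x ∧
    frobeniusNorm b (fderiv ℝ (fun y => NormedSpace.normalize (h y - a)) x) ≤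
      frobeniusNorm b (fderiv ℝ h x) / ‖h x - a‖ := by
  have hsub : h x - a ≠ 0 := sub_ne_zero.2 hne
  have chain_rule : HasFDerivAt (fun y => NormedSpace.normalize (h y - a))
      (fderiv ℝ NormedSpace.normalize (h x - a) ∘L fderiv ℝ h x) x :=
    (hasFDerivAt_normalize hsub).differentiableAt.hasFDerivAt.comp (f := fun y => h y - a) x
      (hdiff.hasFDerivAt.sub_const a)
  refine ⟨chain_rule.differentiableAt, ?_⟩
  rw [chain_rule.fderiv]
  calc frobeniusNorm b (fderiv ℝ NormedSpace.normalize (h x - a) ∘L fderiv ℝ h x)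
      ≤ ‖fderiv ℝ NormedSpace.normalize (h x - a)‖ * frobeniusNorm b (fderiv ℝ h x) :=
        frobeniusNorm_comp_le b _ _
    _ ≤ ‖h x - a‖⁻¹ * frobeniusNorm b (fderiv ℝ h x) :=
        mul_le_mul_of_nonneg_right (norm_fderiv_normalize_le hsub) (frobeniusNorm_nonneg b _)
    _ = frobeniusNorm b (fderiv ℝ h x) / ‖h x - a‖ := (div_eq_inv_mul _ _).symm

theorem radial_projection_composition_gradient_bound
    {n : ℕ} (a : E3) (U : Set (EuclideanSpace ℝ (Fin n))) (hU : IsOpen U)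
    (h : EuclideanSpace ℝ (Fin n) → E3) (x : EuclideanSpace ℝ (Fin n))
    (hx : x ∈ U) (hdiff : DifferentiableAt ℝ h x) (hne : h x ≠ a) :
    DifferentiableAt ℝ (fun y => radialProj a (h y)) x ∧
    Real.sqrt (grad2n (fun y => radialProj a (h y)) x) ≤
      2 * Real.sqrt (grad2n h x) / ‖h x - a‖ := by
  simp only [sqrt_grad2n_eq_frobeniusNorm, radialProj_eq_normalize_sub, mul_div_assoc]
  refine (radial_projection_composition_gradient_bound_general _ hdiff hne).imp_right fun bound =>
    bound.trans (le_mul_of_one_le_left ?_ one_le_two)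
  exact div_nonneg (frobeniusNorm_nonneg _ _) (norm_nonneg _)
end
end

section
/- Let 0 < ρ ≤ 1 and let a ∈ ℝ³ with |a| < ρ/2. Then the radial projection Π_a(x) = (x − a)/|x − a| restricted to the sphere ∂B_ρ is a bijection onto S², and its inverse (Π_a|∂B_ρ)^{−1} : S² → ∂B_ρ is Lipschitz with Lipschitz constant at most 2ρ ≤ 2. -/
open Metric Set

noncomputable section

/-!
Let `x = a + p u` and `y = a + q v` lie on the sphere of radius `ρ`, with `u`, `v` unit vectors and
`p, q > 0`, and let `k = ρ² - ‖a‖²`. Expanding `‖x‖² = ρ²` gives `2 p ⟪a, u⟫ = k - p²`, and likewise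
for `y`, so `⟪a, u - v⟫` and `⟪a, u + v⟫` are explicit in `p`, `q`, `k`. As `u - v` and `u + v` are
orthogonal, Bessel's inequality for `a` bounds `p - q`, and hence the chord:
`‖x - y‖ (p q + k) ≤ 2 ρ p q ‖u - v‖`. Since `p, q ≤ ρ + ‖a‖`, this yields
`‖x - y‖ ≤ (ρ + ‖a‖) ‖u - v‖`. So the projection from `a` is injective on the sphere with a
`(ρ + ‖a‖)`-Lipschitz inverse, and it is onto because every ray from `a` crosses the sphere.
-/

open NormedSpace (normalize normalize_smul_of_pos normalize_eq_self_of_norm_eq_one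
  norm_smul_normalize norm_normalize)
open scoped RealInnerProductSpace

theorem sub_ne_zero_of_mem_sphere_of_norm_lt {E : Type*} [SeminormedAddCommGroup E] {a x : E}
    {ρ : ℝ} (ha : ‖a‖ < ρ) (hx : x ∈ sphere (0 : E) ρ) : x - a ≠ 0 :=
  sub_ne_zero.2 (ne_of_apply_ne norm ((mem_sphere_zero_iff_norm.1 hx).trans_ne ha.ne'))

section NormedSpace

variable {E : Type*} [NormedAddCommGroup E] [NormedSpace ℝ E] {a u : E} {ρ : ℝ}

theorem mapsTo_normalize_sub_sphere (ha : ‖a‖ < ρ) :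
    MapsTo (fun x ↦ normalize (x - a)) (sphere 0 ρ) (sphere 0 1) := fun _ hx ↦
  mem_sphere_zero_iff_norm.2 (norm_normalize (sub_ne_zero_of_mem_sphere_of_norm_lt ha hx))

theorem le_add_norm_of_norm_add_smul_eq {r : ℝ} (hu : ‖u‖ = 1) (hr : ‖a + r • u‖ = ρ) :
    r ≤ ρ + ‖a‖ := by
  have := norm_le_add_norm_add (r • u) a
  rw [norm_smul, hu, mul_one, Real.norm_eq_abs, add_comm _ a, hr] at this
  exact (le_abs_self r).trans this

theorem exists_pos_norm_add_smul_eq (ha : ‖a‖ < ρ) (hu : ‖u‖ = 1) :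
    ∃ r : ℝ, 0 < r ∧ ‖a + r • u‖ = ρ := by
  have hnonneg : 0 ≤ ρ + ‖a‖ := by linarith [norm_nonneg a]
  have hcont : ContinuousOn (fun r : ℝ ↦ ‖a + r • u‖) (Icc 0 (ρ + ‖a‖)) := by fun_prop
  have hstart : ‖a + (0 : ℝ) • u‖ ≤ ρ := by simpa using ha.le
  have hend : ρ ≤ ‖a + (ρ + ‖a‖) • u‖ := by
    linarith [le_add_norm_of_norm_add_smul_eq hu (rfl : ‖a + (ρ + ‖a‖) • u‖ = _)]
  obtain ⟨r, hr, hnorm⟩ := intermediate_value_Icc hnonneg hcont ⟨hstart, hend⟩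
  refine ⟨r, hr.1.lt_of_ne' ?_, hnorm⟩
  rintro rfl
  exact ha.ne (by simpa using hnorm)

theorem surjOn_normalize_sub_sphere (ha : ‖a‖ < ρ) :
    SurjOn (fun x ↦ normalize (x - a)) (sphere 0 ρ) (sphere 0 1) := by
  intro u hu
  rw [mem_sphere_zero_iff_norm] at hu
  obtain ⟨r, hr, hnorm⟩ := exists_pos_norm_add_smul_eq ha hu
  refine ⟨a + r • u, mem_sphere_zero_iff_norm.2 hnorm, ?_⟩
  simp only [add_sub_cancel_left, normalize_smul_of_pos hr, normalize_eq_self_of_norm_eq_one hu]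

end NormedSpace

section InnerProductSpace

variable {E : Type*} [NormedAddCommGroup E] [InnerProductSpace ℝ E] {a u v : E} {p q ρ : ℝ}

theorem inner_sq_add_inner_sq_le_of_inner_eq_zero {w z : E} (a : E) (hwz : ⟪w, z⟫ = 0)
    (hw : ‖w‖ ≤ 1) (hz : ‖z‖ ≤ 1) : ⟪a, w⟫ ^ 2 + ⟪a, z⟫ ^ 2 ≤ ‖a‖ ^ 2 := by
  have hexpand : ‖a - (⟪a, w⟫ • w + ⟪a, z⟫ • z)‖ ^ 2 = ‖a‖ ^ 2
      - 2 * (⟪a, w⟫ ^ 2 + ⟪a, z⟫ ^ 2) + (⟪a, w⟫ ^ 2 * ‖w‖ ^ 2 + ⟪a, z⟫ ^ 2 * ‖z‖ ^ 2) := by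
    rw [norm_sub_sq_real, norm_add_sq_real, inner_add_right]
    simp only [real_inner_smul_left, real_inner_smul_right, hwz, norm_smul, mul_pow,
      Real.norm_eq_abs, sq_abs]
    ring
  have hw' := mul_le_of_le_one_right (sq_nonneg ⟪a, w⟫) (pow_le_one₀ (norm_nonneg w) hw (n := 2))
  have hz' := mul_le_of_le_one_right (sq_nonneg ⟪a, z⟫) (pow_le_one₀ (norm_nonneg z) hz (n := 2))
  linarith [sq_nonneg ‖a - (⟪a, w⟫ • w + ⟪a, z⟫ • z)‖]

theorem inner_sub_sq_add_inner_add_sq_le (a : E) (hu : ‖u‖ = 1) (hv : ‖v‖ = 1) :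
    4 * ⟪a, u - v⟫ ^ 2 + ‖u - v‖ ^ 2 * ⟪a, u + v⟫ ^ 2 ≤ 4 * ‖a‖ ^ 2 * ‖u - v‖ ^ 2 := by
  rcases eq_or_ne (u - v) 0 with huv | huv
  · simp [huv]
  have horth : ⟪normalize (u - v), (2⁻¹ : ℝ) • (u + v)⟫ = 0 := by
    have : ⟪u - v, u + v⟫ = 0 := by
      rw [real_inner_comm, real_inner_add_sub_eq_zero_iff, hu, hv]
    rw [NormedSpace.normalize, real_inner_smul_left, real_inner_smul_right, this]
    ring
  have hhalf : ‖(2⁻¹ : ℝ) • (u + v)‖ ≤ 1 := by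
    rw [norm_smul, Real.norm_of_nonneg (by norm_num)]
    linarith [norm_add_le u v]
  have hbessel := inner_sq_add_inner_sq_le_of_inner_eq_zero a horth (norm_normalize huv).le hhalf
  have hinner : ⟪a, u - v⟫ = ‖u - v‖ * ⟪a, normalize (u - v)⟫ := by
    rw [← real_inner_smul_right, norm_smul_normalize]
  rw [real_inner_smul_right] at hbessel
  rw [hinner]
  linarith [mul_le_mul_of_nonneg_left hbessel (sq_nonneg ‖u - v‖)]

theorem norm_smul_sub_smul_sq (hu : ‖u‖ = 1) (hv : ‖v‖ = 1) (p q : ℝ) :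
    ‖p • u - q • v‖ ^ 2 = p * q * ‖u - v‖ ^ 2 + (p - q) ^ 2 := by
  rw [norm_sub_sq_real, norm_sub_sq_real, real_inner_smul_left, real_inner_smul_right, norm_smul,
    norm_smul, hu, hv, mul_one, mul_one, Real.norm_eq_abs, Real.norm_eq_abs, sq_abs, sq_abs]
  ring

theorem two_mul_mul_inner_eq_of_norm_add_smul_eq (hu : ‖u‖ = 1) (hp : ‖a + p • u‖ = ρ) :
    2 * p * ⟪a, u⟫ = ρ ^ 2 - ‖a‖ ^ 2 - p ^ 2 := by
  rw [← hp, norm_add_sq_real, real_inner_smul_right, norm_smul, hu, mul_one, Real.norm_eq_abs,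
    sq_abs]
  ring

theorem sub_sq_mul_add_le_of_norm_add_smul_eq (hu : ‖u‖ = 1) (hv : ‖v‖ = 1)
    (hp : ‖a + p • u‖ = ρ) (hq : ‖a + q • v‖ = ρ) :
    (p - q) ^ 2 * (p * q + (ρ ^ 2 - ‖a‖ ^ 2)) ^ 2 +
        p * q * (p * q - (ρ ^ 2 - ‖a‖ ^ 2)) ^ 2 * ‖u - v‖ ^ 2 ≤
      4 * ‖a‖ ^ 2 * (p * q) ^ 2 * ‖u - v‖ ^ 2 := by
  have hpu := two_mul_mul_inner_eq_of_norm_add_smul_eq hu hp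
  have hqv := two_mul_mul_inner_eq_of_norm_add_smul_eq hv hq
  have hbessel := mul_le_mul_of_nonneg_left (inner_sub_sq_add_inner_add_sq_le a hu hv)
    (sq_nonneg (p * q))
  set k := ρ ^ 2 - ‖a‖ ^ 2
  have hsub : 2 * (p * q) * ⟪a, u - v⟫ = -((p - q) * (p * q + k)) := by
    rw [inner_sub_right]
    linear_combination q * hpu - p * hqv
  have hadd : 2 * (p * q) * ⟪a, u + v⟫ = -((p + q) * (p * q - k)) := by
    rw [inner_add_right]
    linear_combination q * hpu + p * hqv
  have hamgm : p * q ≤ (p + q) ^ 2 / 4 := by linarith [sq_nonneg (p - q)]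
  calc (p - q) ^ 2 * (p * q + k) ^ 2 + p * q * (p * q - k) ^ 2 * ‖u - v‖ ^ 2
      ≤ (p - q) ^ 2 * (p * q + k) ^ 2 + (p + q) ^ 2 / 4 * (p * q - k) ^ 2 * ‖u - v‖ ^ 2 := by
        gcongr
    _ = (2 * (p * q) * ⟪a, u - v⟫) ^ 2 +
          (2 * (p * q) * ⟪a, u + v⟫) ^ 2 / 4 * ‖u - v‖ ^ 2 := by
        rw [hsub, hadd]
        ring
    _ ≤ 4 * ‖a‖ ^ 2 * (p * q) ^ 2 * ‖u - v‖ ^ 2 := by linarith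

theorem norm_smul_sub_smul_mul_le_of_norm_add_smul_eq (hu : ‖u‖ = 1) (hv : ‖v‖ = 1) (hp0 : 0 ≤ p)
    (hq0 : 0 ≤ q) (hp : ‖a + p • u‖ = ρ) (hq : ‖a + q • v‖ = ρ) :
    ‖p • u - q • v‖ * (p * q + (ρ ^ 2 - ‖a‖ ^ 2)) ≤ 2 * ρ * (p * q) * ‖u - v‖ := by
  have hρ : 0 ≤ ρ := hp ▸ norm_nonneg _
  refine le_of_sq_le_sq ?_ (by positivity)
  calc (‖p • u - q • v‖ * (p * q + (ρ ^ 2 - ‖a‖ ^ 2))) ^ 2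
      = p * q * (p * q + (ρ ^ 2 - ‖a‖ ^ 2)) ^ 2 * ‖u - v‖ ^ 2 +
          (p - q) ^ 2 * (p * q + (ρ ^ 2 - ‖a‖ ^ 2)) ^ 2 := by
        rw [mul_pow, norm_smul_sub_smul_sq hu hv]
        ring
    _ ≤ p * q * (p * q + (ρ ^ 2 - ‖a‖ ^ 2)) ^ 2 * ‖u - v‖ ^ 2 +
          (4 * ‖a‖ ^ 2 * (p * q) ^ 2 * ‖u - v‖ ^ 2 -
            p * q * (p * q - (ρ ^ 2 - ‖a‖ ^ 2)) ^ 2 * ‖u - v‖ ^ 2) := by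
        gcongr
        exact le_sub_iff_add_le.2 (sub_sq_mul_add_le_of_norm_add_smul_eq hu hv hp hq)
    _ = (2 * ρ * (p * q) * ‖u - v‖) ^ 2 := by ring

theorem norm_smul_sub_smul_le_of_norm_add_smul_eq (ha : ‖a‖ < ρ) (hu : ‖u‖ = 1) (hv : ‖v‖ = 1)
    (hp0 : 0 ≤ p) (hq0 : 0 ≤ q) (hp : ‖a + p • u‖ = ρ) (hq : ‖a + q • v‖ = ρ) :
    ‖p • u - q • v‖ ≤ (ρ + ‖a‖) * ‖u - v‖ := by
  have hpos : 0 < p * q + (ρ ^ 2 - ‖a‖ ^ 2) := by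
    have := sub_pos.2 (pow_lt_pow_left₀ ha (norm_nonneg a) two_ne_zero)
    positivity
  have hpq : p * q ≤ (ρ + ‖a‖) * (ρ + ‖a‖) :=
    mul_le_mul (le_add_norm_of_norm_add_smul_eq hu hp) (le_add_norm_of_norm_add_smul_eq hv hq) hq0
      (by linarith [norm_nonneg a])
  have hratio : 2 * ρ * (p * q) ≤ (ρ + ‖a‖) * (p * q + (ρ ^ 2 - ‖a‖ ^ 2)) := by
    linarith [mul_le_mul_of_nonneg_right hpq (sub_pos.2 ha).le]
  refine le_of_mul_le_mul_right ?_ hpos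
  calc ‖p • u - q • v‖ * (p * q + (ρ ^ 2 - ‖a‖ ^ 2))
      ≤ 2 * ρ * (p * q) * ‖u - v‖ :=
        norm_smul_sub_smul_mul_le_of_norm_add_smul_eq hu hv hp0 hq0 hp hq
    _ ≤ (ρ + ‖a‖) * (p * q + (ρ ^ 2 - ‖a‖ ^ 2)) * ‖u - v‖ := by gcongr
    _ = (ρ + ‖a‖) * ‖u - v‖ * (p * q + (ρ ^ 2 - ‖a‖ ^ 2)) := by ring

theorem antilipschitzWith_normalize_sub_sphere (ha : ‖a‖ < ρ) :
    AntilipschitzWith (ρ + ‖a‖).toNNReal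
      ((sphere 0 ρ).domRestrict fun x ↦ normalize (x - a)) := by
  refine AntilipschitzWith.of_le_mul_dist fun ⟨x, hx⟩ ⟨y, hy⟩ ↦ ?_
  have hxa := sub_ne_zero_of_mem_sphere_of_norm_lt ha hx
  have hya := sub_ne_zero_of_mem_sphere_of_norm_lt ha hy
  rw [mem_sphere_zero_iff_norm] at hx hy
  have hbound := norm_smul_sub_smul_le_of_norm_add_smul_eq ha
    (norm_normalize hxa) (norm_normalize hya) (norm_nonneg (x - a)) (norm_nonneg (y - a))
    (by rwa [norm_smul_normalize, add_sub_cancel]) (by rwa [norm_smul_normalize, add_sub_cancel])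
  rw [norm_smul_normalize, norm_smul_normalize, sub_sub_sub_cancel_right] at hbound
  rwa [Real.coe_toNNReal _ (by linarith [norm_nonneg a]), Subtype.dist_eq, dist_eq_norm,
    dist_eq_norm]

theorem radial_projection_bijective_with_lipschitz_inverse_general (ha : ‖a‖ < ρ) :
    BijOn (fun x ↦ normalize (x - a)) (sphere 0 ρ) (sphere 0 1) ∧
    ∃ Ψ : E → E, MapsTo Ψ (sphere 0 1) (sphere 0 ρ) ∧
      InvOn Ψ (fun x ↦ normalize (x - a)) (sphere 0 ρ) (sphere 0 1) ∧
      LipschitzOnWith (ρ + ‖a‖).toNNReal Ψ (sphere 0 1) := by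
  have hanti := antilipschitzWith_normalize_sub_sphere ha
  have hsurj := surjOn_normalize_sub_sphere ha
  have hbij : BijOn (fun x ↦ normalize (x - a)) (sphere 0 ρ) (sphere 0 1) :=
    ⟨mapsTo_normalize_sub_sphere ha, injOn_iff_injective.2 hanti.injective, hsurj⟩
  have hinv := hbij.invOn_invFunOn
  exact ⟨hbij, _, hsurj.mapsTo_invFunOn, hinv,
    lipschitzOnWith_iff_restrict.2 (hanti.to_rightInvOn' hsurj.mapsTo_invFunOn hinv.2)⟩

end InnerProductSpace

theorem radial_projection_bijective_with_lipschitz_inverse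
    (ρ : ℝ) (hρ0 : 0 < ρ) (hρ1 : ρ ≤ 1) (a : E3) (ha : ‖a‖ < ρ / 2) :
    BijOn (radialProj a) (sphere (0:E3) ρ) (sphere (0:E3) 1) ∧
    ∃ Ψ : E3 → E3, MapsTo Ψ (sphere (0:E3) 1) (sphere (0:E3) ρ) ∧
      InvOn Ψ (radialProj a) (sphere (0:E3) ρ) (sphere (0:E3) 1) ∧
      LipschitzOnWith (Real.toNNReal (2 * ρ)) Ψ (sphere (0:E3) 1) ∧
      2 * ρ ≤ 2 := by
  obtain ⟨hbij, Ψ, hmaps, hinv, hlip⟩ :=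
    radial_projection_bijective_with_lipschitz_inverse_general (show ‖a‖ < ρ by linarith)
  exact ⟨hbij, Ψ, hmaps, hinv, hlip.weaken (Real.toNNReal_le_toNNReal (by linarith)), by linarith⟩
end
end

section
/- Let C > 0 and K > 0, and let D : [1/2, 1] → [0, ∞) be a nondecreasing, locally absolutely continuous function satisfying D(σ) ≤ C (D'(σ) + K)^{1/2} for almost every σ ∈ [1/2, 1]. Then D(1/2) ≤ 2K (√(1 + K/C²) − 1)^{−1}; equivalently, D(1/2) ≤ 2/θ₀ where θ₀ is the positive root of the polynomial K θ² + 2θ − C^{−2}. -/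
open MeasureTheory Set intervalIntegral

noncomputable section

/-!
On `[a, b]` with `D a > 0`, the function `g = -1/D` is nondecreasing with `g' = D'/D²` almost
everywhere. The hypothesis gives `D' ≥ D²/C² - K`, and `D ≥ D a` turns this into
`g' ≥ 1/C² - K/(D a)²`. The integral of the a.e. derivative of a nondecreasing function is at most
its increment, which for `g` is less than `y = 1/D a`. Hence `(1/C² - K y²) (b - a) < y`, so `y`
exceeds the positive root of a quadratic polynomial.
-/

section MonotoneOn

variable {f : ℝ → ℝ} {a b c : ℝ}

theorem monotoneOn_neg_inv_of_pos {α 𝕜 : Type*} [Preorder α] [Field 𝕜] [LinearOrder 𝕜]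
    [IsStrictOrderedRing 𝕜] {f : α → 𝕜} {s : Set α} (hf : MonotoneOn f s)
    (hpos : ∀ x ∈ s, 0 < f x) : MonotoneOn (fun x ↦ -(f x)⁻¹) s :=
  fun x hx _ hy hxy ↦ neg_le_neg (inv_anti₀ (hpos x hx) (hf hx hy hxy))

theorem ae_differentiableAt_of_monotoneOn_Icc (hf : MonotoneOn f (Icc a b)) :
    ∀ᵐ x ∂volume.restrict (Icc a b), DifferentiableAt ℝ f x := by
  rw [← restrict_Ioo_eq_restrict_Icc]
  filter_upwards [(hf.mono Ioo_subset_Icc_self).ae_differentiableWithinAt measurableSet_Ioo,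
    ae_restrict_mem measurableSet_Ioo] with x hdiff hx
  exact hdiff.differentiableAt (isOpen_Ioo.mem_nhds hx)

theorem integral_deriv_le_sub_of_monotoneOn (hab : a ≤ b) (hf : MonotoneOn f (Icc a b)) :
    ∫ x in a..b, deriv f x ≤ f b - f a := by
  have hfab : f a ≤ f b := hf (left_mem_Icc.2 hab) (right_mem_Icc.2 hab) hab
  have hmem := MonotoneOn.intervalIntegral_deriv_mem_uIcc (uIcc_of_le hab ▸ hf)
  rw [uIcc_of_le (sub_nonneg.2 hfab)] at hmem
  exact hmem.2

theorem mul_sub_le_sub_of_ae_le_deriv (hab : a ≤ b) (hf : MonotoneOn f (Icc a b))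
    (hderiv : ∀ᵐ x ∂volume.restrict (Icc a b), c ≤ deriv f x) :
    c * (b - a) ≤ f b - f a :=
  calc c * (b - a)
    _ = ∫ _ in a..b, c := by rw [intervalIntegral.integral_const, smul_eq_mul, mul_comm]
    _ ≤ ∫ x in a..b, deriv f x :=
      integral_mono_ae_restrict hab intervalIntegrable_const
        (MonotoneOn.intervalIntegrable_deriv (uIcc_of_le hab ▸ hf)) hderiv
    _ ≤ f b - f a := integral_deriv_le_sub_of_monotoneOn hab hf

theorem mul_sub_lt_inv_of_ae_mul_sq_le_deriv (hab : a ≤ b) (hf : MonotoneOn f (Icc a b))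
    (hfa : 0 < f a) (hderiv : ∀ᵐ x ∂volume.restrict (Icc a b), c * f x ^ 2 ≤ deriv f x) :
    c * (b - a) < (f a)⁻¹ := by
  have hpos : ∀ x ∈ Icc a b, 0 < f x := fun x hx ↦
    hfa.trans_le (hf (left_mem_Icc.2 hab) hx hx.1)
  have hderiv_neg_inv :
      ∀ᵐ x ∂volume.restrict (Icc a b), c ≤ deriv (fun x ↦ -(f x)⁻¹) x := by
    filter_upwards [hderiv, ae_differentiableAt_of_monotoneOn_Icc hf,
      ae_restrict_mem measurableSet_Icc] with x hle hdiff hx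
    rw [deriv.fun_neg, deriv_fun_inv'' hdiff (hpos x hx).ne', neg_div, neg_neg,
      le_div_iff₀ (pow_pos (hpos x hx) 2)]
    exact hle
  have hincr := mul_sub_le_sub_of_ae_le_deriv hab (monotoneOn_neg_inv_of_pos hf hpos)
    hderiv_neg_inv
  have hfb : 0 < (f b)⁻¹ := inv_pos.2 (hpos b (right_mem_Icc.2 hab))
  linarith

end MonotoneOn

section SqrtInequality

variable {C K x : ℝ}

theorem sq_le_sq_mul_of_le_mul_sqrt {z : ℝ} (hx : 0 < x) (h : x ≤ C * √z) :
    x ^ 2 ≤ C ^ 2 * z := by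
  have hsqrt : √z ≠ 0 := by
    intro hz
    rw [hz, mul_zero] at h
    exact h.not_gt hx
  calc x ^ 2 ≤ (C * √z) ^ 2 := by gcongr
    _ = C ^ 2 * z := by rw [mul_pow, Real.sq_sqrt (Real.sqrt_ne_zero'.1 hsqrt).le]

theorem mul_sq_le_of_le_mul_sqrt_add {m d : ℝ} (hC : C ≠ 0) (hK : 0 ≤ K) (hm : 0 < m)
    (hmx : m ≤ x) (h : x ≤ C * √(d + K)) :
    (1 / C ^ 2 - K * m⁻¹ ^ 2) * x ^ 2 ≤ d := by
  have hd : x ^ 2 / C ^ 2 ≤ d + K := by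
    rw [div_le_iff₀' (by positivity)]
    exact sq_le_sq_mul_of_le_mul_sqrt (hm.trans_le hmx) h
  have hratio : 1 ≤ (m⁻¹ * x) ^ 2 := one_le_pow₀ ((le_inv_mul_iff₀ hm).2 (by rwa [mul_one]))
  calc (1 / C ^ 2 - K * m⁻¹ ^ 2) * x ^ 2 = x ^ 2 / C ^ 2 - K * (m⁻¹ * x) ^ 2 := by ring
    _ ≤ x ^ 2 / C ^ 2 - K := sub_le_sub_left (le_mul_of_one_le_right hK hratio) _
    _ ≤ d := sub_le_iff_le_add.2 hd

theorem one_lt_sqrt_one_add {z : ℝ} (hz : 0 < z) : 1 < √(1 + z) :=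
  Real.lt_sqrt_of_sq_lt (by linarith)

theorem lt_mul_inv_sqrt_sub_one {L : ℝ} (hC : C ≠ 0) (hK : 0 < K) (hL : 0 < L) (hx : 0 < x)
    (h : (1 / C ^ 2 - K * x⁻¹ ^ 2) * L < x⁻¹) :
    x < 2 * K * L * (√(1 + 4 * K * L ^ 2 / C ^ 2) - 1)⁻¹ := by
  have hdiscr : 1 + 4 * K * L ^ 2 / C ^ 2 < (1 + 2 * K * L * x⁻¹) ^ 2 := by
    linear_combination 4 * K * L * h
  have hroot : √(1 + 4 * K * L ^ 2 / C ^ 2) < 1 + 2 * K * L * x⁻¹ :=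
    (Real.sqrt_lt' (by positivity)).2 hdiscr
  have hsqrt : 0 < √(1 + 4 * K * L ^ 2 / C ^ 2) - 1 :=
    sub_pos.2 (one_lt_sqrt_one_add (by positivity))
  rw [← div_eq_mul_inv, lt_div_iff₀' hsqrt, ← lt_div_iff₀ hx, div_eq_mul_inv]
  exact sub_lt_iff_lt_add'.2 hroot

end SqrtInequality

theorem differential_inequality_bound_general {C K a b : ℝ} {D : ℝ → ℝ} (hC : 0 < C)
    (hK : 0 < K) (hab : a < b) (hmono : MonotoneOn D (Icc a b))
    (hineq : ∀ᵐ σ ∂volume.restrict (Icc a b), D σ ≤ C * √(deriv D σ + K)) :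
    D a < 2 * K * (b - a) * (√(1 + 4 * K * (b - a) ^ 2 / C ^ 2) - 1)⁻¹ := by
  have hL : 0 < b - a := sub_pos.2 hab
  rcases le_or_gt (D a) 0 with hDa | hDa
  · have hsqrt : 0 < √(1 + 4 * K * (b - a) ^ 2 / C ^ 2) - 1 :=
      sub_pos.2 (one_lt_sqrt_one_add (by positivity))
    exact hDa.trans_lt (by positivity)
  · refine lt_mul_inv_sqrt_sub_one hC.ne' hK hL hDa
      (mul_sub_lt_inv_of_ae_mul_sq_le_deriv hab.le hmono hDa ?_)
    filter_upwards [hineq, ae_restrict_mem measurableSet_Icc] with σ hσ hmem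
    exact mul_sq_le_of_le_mul_sqrt_add hC.ne' hK.le hDa
      (hmono (left_mem_Icc.2 hab.le) hmem hmem.1) hσ

theorem differential_inequality_bound
    (C K : ℝ) (hC : 0 < C) (hK : 0 < K) (D : ℝ → ℝ)
    (hmono : MonotoneOn D (Icc (1/2 : ℝ) 1))
    (hnonneg : ∀ σ ∈ Icc (1/2 : ℝ) 1, 0 ≤ D σ)
    -- local absolute continuity of the monotone function `D`, stated as the validity
    -- of the fundamental theorem of calculus for its a.e. derivative
    (hAC : ∀ s ∈ Icc (1/2 : ℝ) 1, ∀ t ∈ Icc (1/2 : ℝ) 1, s ≤ t →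
      D t - D s = ∫ σ in s..t, deriv D σ)
    (hineq : ∀ᵐ σ ∂(volume.restrict (Icc (1/2 : ℝ) 1)),
      D σ ≤ C * Real.sqrt (deriv D σ + K)) :
    D (1/2) ≤ 2 * K * (Real.sqrt (1 + K / C ^ 2) - 1)⁻¹ := by
  have hsqrt : 0 < √(1 + K / C ^ 2) - 1 := sub_pos.2 (one_lt_sqrt_one_add (by positivity))
  calc D (1 / 2) ≤ 2 * K * (1 - 1 / 2) * (√(1 + 4 * K * (1 - 1 / 2) ^ 2 / C ^ 2) - 1)⁻¹ :=
        (differential_inequality_bound_general hC hK (by norm_num) hmono hineq).le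
    _ = K * (√(1 + K / C ^ 2) - 1)⁻¹ := by ring_nf
    _ ≤ 2 * K * (√(1 + K / C ^ 2) - 1)⁻¹ := by gcongr; linarith
end
end
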